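/- Let f : 𝔸 → 𝔸 (𝔸 = T¹ × I) be a quasiperiodically forced increasing interval map, driven by an irrational rotation R of T¹, and let Γ = {(θ, γ(θ)) : θ ∈ T¹} be an f-invariant curve with γ : T¹ → int I continuous. Then there exists a topological extension f̂ : 𝔸 → 𝔸 of f with factor map h from f̂ to f of the form h(θ,x) = (θ, h_θ(x)) such that: (i) f̂ is a quasiperiodically forced increasing interval map; (ii) all fibre maps h_θ are non-decreasing; (iii) h is injective on the complement of h^{-1}(Γ); (iv) for a countable set of points of Γ the h-preimage is a non-degenerate vertical segment, and for all other points of Γ it is a singleton; (v) h^{-1}(Γ) contains no graph of a continuous curve η : T¹ → I; (vi) h^{-1}(Γ) is pinched and contains an almost automorphic minimal set of f̂ which is not almost periodic. -/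

import Mathlib

open Set Function MeasureTheory

noncomputable section

/-- The circle `T¹ = ℝ/ℤ`. -/
abbrev T1 := AddCircle (1 : ℝ)

/-- The `n`-th iterate (`n ∈ ℤ`) of a bijection. -/
def zIter {X : Type*} (g : Equiv.Perm X) (n : ℤ) : X → X := fun x => (g ^ n) x

/-- A set of integers is syndetic if it has bounded gaps. -/
def ZSyndetic (S : Set ℤ) : Prop := ∃ N : ℕ, ∀ n : ℤ, ∃ k ∈ S, |k - n| ≤ (N : ℤ)

/-- A homeomorphism `α` of a metric space is almost periodic if for every `ε > 0` the set
`{n ∈ ℤ | dist(αⁿ, Id) < ε}` is syndetic. -/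
def AlmostPeriodicHomeo {Θ : Type*} [MetricSpace Θ] (α : Θ ≃ₜ Θ) : Prop :=
  ∀ ε > (0 : ℝ), ZSyndetic {n : ℤ | ∀ θ : Θ, dist (zIter α.toEquiv n θ) θ < ε}

/-- A homeomorphism is minimal if every (two-sided) orbit is dense. -/
def MinimalHomeo {Θ : Type*} [TopologicalSpace Θ] (α : Θ ≃ₜ Θ) : Prop :=
  ∀ θ : Θ, Dense (range fun n : ℤ => zIter α.toEquiv n θ)

/-- A self-map `g` of a metric space is almost periodic if its family of iterates
is (uniformly) equicontinuous. -/
def AlmostPeriodicMap {Y : Type*} [MetricSpace Y] (g : Y → Y) : Prop :=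
  ∀ ε > (0 : ℝ), ∃ δ > (0 : ℝ), ∀ y y' : Y, dist y y' < δ → ∀ n : ℕ, dist (g^[n] y) (g^[n] y') < ε

/-- `h` is a factor map (semiconjugacy) from `(X, f)` onto `(Y, g)`:
a continuous surjection with `h ∘ f = g ∘ h`.  Then `(X, f)` is a topological
extension of `(Y, g)`. -/
def IsFactorMap {X Y : Type*} [TopologicalSpace X] [TopologicalSpace Y]
    (f : X → X) (g : Y → Y) (h : X → Y) : Prop :=
  Continuous h ∧ Surjective h ∧ h ∘ f = g ∘ h

/-- A map `h` is almost 1-1 if the set of points of the target having exactly one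
preimage is dense. -/
def AlmostOneOne {X Y : Type*} [TopologicalSpace Y] (h : X → Y) : Prop :=
  Dense {y : Y | ∃! x, h x = y}

/-- A witness that the system `(X, f)` is almost automorphic: an almost periodic
homeomorphism of a compact metric space which is an almost 1-1 factor of `(X, f)`. -/
structure AAWitness {X : Type*} [TopologicalSpace X] (f : X → X) where
  (Y : Type)
  [mY : MetricSpace Y]
  [cY : CompactSpace Y]
  (g : Y ≃ₜ Y)
  (hmap : X → Y)
  (factor : IsFactorMap f (⇑g) hmap)
  (a11 : AlmostOneOne hmap)
  (ap : ∀ ε > (0 : ℝ), ∃ δ > (0 : ℝ), ∀ y y' : Y, dist y y' < δ →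
        ∀ n : ℤ, dist (zIter g.toEquiv n y) (zIter g.toEquiv n y') < ε)

/-- `M` is a minimal set of `f`: nonempty, closed, invariant, and without proper
nonempty closed invariant subsets. -/
def IsMinimalSet {X : Type*} [TopologicalSpace X] (f : X → X) (M : Set X) : Prop :=
  M.Nonempty ∧ IsClosed M ∧ f '' M = M ∧
    ∀ M' ⊆ M, M'.Nonempty → IsClosed M' → f '' M' ⊆ M' → M' = M

/-- The restriction of `f` to an invariant set. -/
def restrictMap {X : Type*} {f : X → X} {M : Set X} (hM : Set.MapsTo f M M) : ↥M → ↥M :=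
  Set.MapsTo.restrict f M M hM

/-- `M` is an almost automorphic minimal set of `f`: `f` restricted to `M` admits an
almost periodic almost 1-1 factor. -/
def IsAAMinimal {X : Type*} [MetricSpace X] (f : X → X) (M : Set X) : Prop :=
  IsMinimalSet f M ∧ ∀ hM : Set.MapsTo f M M, Nonempty (AAWitness (restrictMap hM))

/-- `M` is an almost periodic minimal set of `f`: the family of iterates of the
restriction of `f` to `M` is equicontinuous. -/
def IsAPMinimal {X : Type*} [MetricSpace X] (f : X → X) (M : Set X) : Prop :=
  IsMinimalSet f M ∧ ∀ hM : Set.MapsTo f M M, AlmostPeriodicMap (restrictMap hM)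

/-- A subset of a product is pinched if some fibre is a singleton. -/
def Pinched {Θ X : Type*} (A : Set (Θ × X)) : Prop := ∃ θ : Θ, ∃! x : X, (θ, x) ∈ A

/-- An `α`-forced increasing interval map on `Θ × I`: a continuous skew product over `α`
whose fibre maps are strictly increasing. -/
def ForcedIncreasing {Θ : Type*} [TopologicalSpace Θ] {I : Set ℝ} (α : Θ → Θ)
    (f : Θ × ↥I → Θ × ↥I) : Prop :=
  Continuous f ∧ (∀ p : Θ × ↥I, (f p).1 = α p.1) ∧
    ∀ θ : Θ, StrictMono fun x : ↥I => (f (θ, x)).2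

/-- The fibre of `M ⊆ Θ × I` over `θ`, as a set of reals. -/
def fiberSet {Θ : Type*} {I : Set ℝ} (M : Set (Θ × ↥I)) (θ : Θ) : Set ℝ :=
  (fun x : ↥I => (x : ℝ)) '' {x : ↥I | (θ, x) ∈ M}

/-- The filled-in envelope `[φ⁻_M, φ⁺_M]` of `M`, where `φ⁻_M(θ) = inf M_θ` and
`φ⁺_M(θ) = sup M_θ`. -/
def FilledEnvelope {Θ : Type*} {I : Set ℝ} (M : Set (Θ × ↥I)) : Set (Θ × ↥I) :=
  {p : Θ × ↥I | sInf (fiberSet M p.1) ≤ (p.2 : ℝ) ∧ (p.2 : ℝ) ≤ sSup (fiberSet M p.1)}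

/-- The graph of a curve `γ : Θ → I`. -/
def curveGraph {Θ : Type*} {I : Set ℝ} (γ : Θ → ↥I) : Set (Θ × ↥I) :=
  {p : Θ × ↥I | p.2 = γ p.1}

/-- The conclusion of the blow-up construction (properties (i)-(v) of the main theorem):
`f̂` is a topological extension of `f` via the fibre-respecting factor map `h`, `f̂` is an
`α`-forced increasing interval map, the fibre maps of `h` are non-decreasing, `h` is
injective off `h⁻¹(Γ)`, countably many points of `Γ` have non-degenerate vertical-segment
preimages while all other points of `Γ` have singleton preimages, and `h⁻¹(Γ)` contains
the graph of no continuous curve. -/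
def BlowUpConclusion {Θ : Type*} [TopologicalSpace Θ] {I : Set ℝ}
    (α : Θ → Θ) (f : Θ × ↥I → Θ × ↥I) (γ : Θ → ↥I)
    (fhat : Θ × ↥I → Θ × ↥I) (h : Θ × ↥I → Θ × ↥I) : Prop :=
  IsFactorMap fhat f h ∧ (∀ p : Θ × ↥I, (h p).1 = p.1) ∧
  ForcedIncreasing α fhat ∧
  (∀ θ : Θ, Monotone fun x : ↥I => (h (θ, x)).2) ∧
  Set.InjOn h (h ⁻¹' curveGraph γ)ᶜ ∧
  (∃ C : Set (Θ × ↥I), C ⊆ curveGraph γ ∧ C.Countable ∧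
    (∀ p ∈ C, ∃ x₁ x₂ : ↥I, x₁ < x₂ ∧ h ⁻¹' {p} = {p.1} ×ˢ Set.Icc x₁ x₂) ∧
    (∀ p ∈ curveGraph γ \ C, ∃ x : ↥I, h ⁻¹' {p} = {(p.1, x)})) ∧
  (∀ η : Θ → ↥I, Continuous η → ¬ (curveGraph η ⊆ h ⁻¹' curveGraph γ))

/-!
Fix `θ₀` and an oscillating quotient `τ / δ` there: `δ` vanishes only at `θ₀`, and `τ / δ` exceeds
`1` and falls below `-1` arbitrarily near `θ₀`. Adding to `τ` a fibre coordinate that is strictly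
increasing and vanishes on `Γ`, and transporting the quotient by the powers of the rotation, gives
one quotient for each point of `Γ` over the orbit of `θ₀`. Adjoin to `𝔸` the values of all these
quotients, clamped to `[-1, 1]`. The resulting space has nondegenerate arcs as fibres, ordered by
a weighted sum of the coordinates, hence it is again homeomorphic to `𝔸`. The map `f` lifts to it
by shifting the new coordinates, and only the points of `Γ` over the orbit of `θ₀` have been
opened into segments.

Along a continuous curve above `Γ` the coordinate belonging to `θ₀` would be both `1` and `-1` at
`θ₀`. The part of the preimage of `Γ` off the orbit of `θ₀` has minimal closure, which is an
almost 1-1 extension of the rotation. Over `θ₀` this closure contains two distinct points. They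
differ in a single coordinate, which the inverse of the lift moves off to infinity, so their
backward orbits are asymptotic, which is incompatible with equicontinuous iterates.
-/

open Filter Topology

section Minimal

variable {Θ : Type*} [TopologicalSpace Θ] {α : Θ ≃ₜ Θ}

theorem zIter_toEquiv (α : Θ ≃ₜ Θ) (n : ℤ) : zIter α.toEquiv n = ⇑(α ^ n) :=
  congrArg DFunLike.coe
    (map_zpow (MonoidHom.mk' (Homeomorph.toEquiv : (Θ ≃ₜ Θ) → Equiv.Perm Θ) fun _ _ => rfl)
      α n).symm

theorem dense_compl_range_of_countable {X ι : Type*} [TopologicalSpace X] [T1Space X]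
    [BaireSpace X] [∀ x : X, (𝓝[≠] x).NeBot] [Countable ι] (u : ι → X) :
    Dense (range u)ᶜ := by
  have hcompl : (range u)ᶜ = ⋂ i, {u i}ᶜ := by
    ext x
    simp [eq_comm]
  rw [hcompl]
  exact dense_iInter_of_isOpen (fun i => isOpen_compl_singleton)
    fun i => dense_compl_singleton (u i)

namespace MinimalHomeo

theorem dense_orbit (hα : MinimalHomeo α) (θ : Θ) : Dense (range fun n : ℤ => (α ^ n) θ) := by
  simpa only [zIter_toEquiv] using hα θ

theorem injective_orbit [T1Space Θ] [Infinite Θ] (hα : MinimalHomeo α) (θ : Θ) :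
    Injective fun n : ℤ => (α ^ n) θ := by
  intro m n hmn
  by_contra hne
  have hk : m - n ≠ 0 := sub_ne_zero.2 hne
  have hfix : (α ^ (m - n)) θ = θ := by
    calc (α ^ (m - n)) θ = (α ^ (-n)) ((α ^ m) θ) := by
          rw [sub_eq_neg_add, zpow_add, Homeomorph.mul_apply]
      _ = (α ^ (-n)) ((α ^ n) θ) := congrArg _ hmn
      _ = θ := by rw [← Homeomorph.mul_apply, zpow_neg, inv_mul_cancel, Homeomorph.one_apply]
  have hperiod (q : ℤ) : (α ^ ((m - n) * q)) θ = θ := by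
    rw [zpow_mul, ← zIter_toEquiv]
    exact IsFixedPt.perm_zpow hfix q
  have hfin : (range fun n : ℤ => (α ^ n) θ).Finite := by
    refine ((finite_Ico 0 |m - n|).image fun r : ℤ => (α ^ r) θ).subset ?_
    rintro _ ⟨l, rfl⟩
    refine ⟨l % (m - n), ⟨Int.emod_nonneg l hk, Int.emod_lt_abs l hk⟩, ?_⟩
    conv_rhs => rw [← Int.emod_add_mul_ediv l (m - n)]
    simp only [zpow_add, Homeomorph.mul_apply, hperiod]
  exact infinite_univ ((hα.dense_orbit θ).closure_eq ▸ hfin.isClosed.closure_eq.symm ▸ hfin)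

theorem neBot_nhdsNE [CompactSpace Θ] [Infinite Θ] (hα : MinimalHomeo α) (θ : Θ) :
    (𝓝[≠] θ).NeBot := by
  refine neBot_iff.2 fun hbot => ?_
  have hθ : IsOpen {θ} := (isOpen_singleton_iff_punctured_nhds θ).2 hbot
  have hopen (θ' : Θ) : IsOpen {θ'} := by
    obtain ⟨_, ⟨n, rfl⟩, hmem⟩ := (hα.dense_orbit θ').exists_mem_open hθ (singleton_nonempty θ)
    have hpre : (α ^ n) ⁻¹' {θ} = {θ'} := by
      rw [← mem_singleton_iff.1 hmem, ← image_singleton, preimage_image_eq _ (α ^ n).injective]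
    exact hpre ▸ hθ.preimage (α ^ n).continuous
  have : DiscreteTopology Θ := discreteTopology_iff_isOpen_singleton.2 hopen
  have := finite_of_compact_of_discrete (X := Θ)
  exact not_finite Θ

theorem eq_univ_of_mapsTo [CompactSpace Θ] (hα : MinimalHomeo α) {E : Set Θ} (hE : IsClosed E)
    (hne : E.Nonempty) (hmaps : MapsTo α E E) : E = univ := by
  have himage (n : ℕ) : (α ^ (n + 1)) '' E ⊆ (α ^ n) '' E := by
    rintro _ ⟨θ, hθ, rfl⟩
    exact ⟨α θ, hmaps hθ, by rw [pow_succ, Homeomorph.mul_apply]⟩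
  have hclosed (n : ℕ) : IsClosed ((α ^ n) '' E) := (α ^ n).isClosed_image.2 hE
  obtain ⟨θ, hθ⟩ := IsCompact.nonempty_iInter_of_sequence_nonempty_isCompact_isClosed
    (fun n : ℕ => (α ^ n) '' E) himage (fun n => hne.image _) (hclosed 0).isCompact hclosed
  have horbit : range (fun n : ℤ => (α ^ n) θ) ⊆ E := by
    rintro _ ⟨n, rfl⟩
    obtain ⟨θ', hθ', rfl⟩ := mem_iInter.1 hθ n.natAbs
    have hpow (k : ℕ) : (α ^ k) θ' ∈ E := by
      induction k with
      | zero => exact hθ'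
      | succ k ih => rw [pow_succ', Homeomorph.mul_apply]; exact hmaps ih
    obtain ⟨k, hk⟩ : ∃ k : ℕ, n + n.natAbs = k := Int.eq_ofNat_of_zero_le (by omega)
    have hshift : (α ^ n) ((α ^ n.natAbs) θ') = (α ^ k) θ' := by
      rw [← Homeomorph.mul_apply, ← zpow_natCast α n.natAbs, ← zpow_add, hk, zpow_natCast]
    exact mem_of_eq_of_mem hshift (hpow k)
  exact eq_univ_of_univ_subset ((hα.dense_orbit θ).closure_eq ▸ hE.closure_subset_iff.2 horbit)

end MinimalHomeo

end Minimal

section Oscillation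

variable {Θ : Type*} [MetricSpace Θ] {δ τ : Θ → ℝ} {θ₀ : Θ}

/-- `τ` oscillates at `θ₀` relative to the gauge `δ`: the gauge is a continuous function vanishing
exactly at `θ₀`, and the quotient `τ / δ` takes values above `1` and values below `-1` arbitrarily
close to `θ₀`, where the continuous function `τ` vanishes. The inequalities are stated without the
quotient. -/
structure IsOscillation (δ τ : Θ → ℝ) (θ₀ : Θ) : Prop where
  continuous_gauge : Continuous δ
  gauge_nonneg : ∀ θ, 0 ≤ δ θ
  gauge_eq_zero_iff : ∀ θ, δ θ = 0 ↔ θ = θ₀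
  continuous_osc : Continuous τ
  osc_center : τ θ₀ = 0
  mem_closure_gauge_lt : θ₀ ∈ closure {θ | δ θ < τ θ}
  mem_closure_lt_neg_gauge : θ₀ ∈ closure {θ | τ θ < -δ θ}

theorem exists_injective_tendsto_of_neBot_nhdsNE (θ₀ : Θ) [(𝓝[≠] θ₀).NeBot] :
    ∃ u : ℕ → Θ, Injective u ∧ (∀ n, u n ≠ θ₀) ∧ Tendsto u atTop (𝓝 θ₀) := by
  have hglb : IsGLB ((fun θ => dist θ θ₀) '' {θ₀}ᶜ) 0 := by
    refine ⟨?_, fun b hb => le_of_forall_pos_lt_add fun ε hε => ?_⟩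
    · rintro _ ⟨θ, -, rfl⟩
      exact dist_nonneg
    · obtain ⟨θ, hball, hne⟩ := Filter.nonempty_of_mem
        (inter_mem_nhdsWithin {θ₀}ᶜ (Metric.ball_mem_nhds θ₀ hε))
      rw [zero_add]
      exact (hb (mem_image_of_mem _ hball)).trans_lt hne
  have hzero : (0 : ℝ) ∉ (fun θ => dist θ θ₀) '' {θ₀}ᶜ := by
    rintro ⟨θ, hθ, h⟩
    exact hθ (dist_eq_zero.1 h)
  obtain ⟨d, hanti, -, hlim, hmem⟩ := hglb.exists_seq_strictAnti_tendsto_of_notMem hzero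
    ((NeBot.nonempty_of_mem ‹_› self_mem_nhdsWithin).image _)
  choose u hne hdist using hmem
  simp only at hdist
  refine ⟨u, fun m n h => hanti.injective ?_, hne, tendsto_iff_dist_tendsto_zero.2 ?_⟩
  · rw [← hdist m, ← hdist n, h]
  · simpa only [hdist] using hlim

theorem isOscillation_of_isClosed {A B : Set Θ} (hA : IsClosed A) (hB : IsClosed B)
    (hAB : A ∩ B = {θ₀}) (hA₀ : θ₀ ∈ closure (A \ B)) (hB₀ : θ₀ ∈ closure (B \ A)) :
    IsOscillation (fun θ => (Metric.infDist θ A + Metric.infDist θ B) / 2)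
      (fun θ => Metric.infDist θ B - Metric.infDist θ A) θ₀ := by
  have hθ₀ : θ₀ ∈ A ∩ B := hAB ▸ mem_singleton θ₀
  have hA_zero {θ} : Metric.infDist θ A = 0 ↔ θ ∈ A :=
    (hA.mem_iff_infDist_zero ⟨θ₀, hθ₀.1⟩).symm
  have hB_zero {θ} : Metric.infDist θ B = 0 ↔ θ ∈ B :=
    (hB.mem_iff_infDist_zero ⟨θ₀, hθ₀.2⟩).symm
  have hA_nonneg θ : 0 ≤ Metric.infDist θ A := Metric.infDist_nonneg
  have hB_nonneg θ : 0 ≤ Metric.infDist θ B := Metric.infDist_nonneg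
  have hA_cont := Metric.continuous_infDist_pt A
  have hB_cont := Metric.continuous_infDist_pt B
  refine ⟨(hA_cont.add hB_cont).div_const 2, fun θ => ?_, fun θ => ?_, hB_cont.sub hA_cont, ?_,
    closure_mono (fun θ hθ => ?_) hA₀, closure_mono (fun θ hθ => ?_) hB₀⟩
  · linarith [hA_nonneg θ, hB_nonneg θ]
  · have hmem : θ = θ₀ ↔ θ ∈ A ∩ B := by rw [hAB, mem_singleton_iff]
    rw [hmem, mem_inter_iff, ← hA_zero, ← hB_zero, div_eq_zero_iff, or_iff_left two_ne_zero,
      add_eq_zero_iff_of_nonneg (hA_nonneg θ) (hB_nonneg θ)]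
  · rw [hA_zero.2 hθ₀.1, hB_zero.2 hθ₀.2, sub_zero]
  · have hpos := (hB_nonneg θ).lt_of_ne fun h => hθ.2 (hB_zero.1 h.symm)
    rw [mem_ofPred_eq, hA_zero.2 hθ.1]
    linarith
  · have hpos := (hA_nonneg θ).lt_of_ne fun h => hθ.2 (hA_zero.1 h.symm)
    rw [mem_ofPred_eq, hB_zero.2 hθ.1]
    linarith

theorem exists_isOscillation (θ₀ : Θ) [(𝓝[≠] θ₀).NeBot] :
    ∃ δ τ : Θ → ℝ, IsOscillation δ τ θ₀ := by
  obtain ⟨u, hinj, hne, hlim⟩ := exists_injective_tendsto_of_neBot_nhdsNE θ₀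
  have heven : Tendsto (fun n => u (2 * n)) atTop (𝓝 θ₀) :=
    hlim.comp (strictMono_id.const_mul two_pos).tendsto_atTop
  have hodd : Tendsto (fun n => u (2 * n + 1)) atTop (𝓝 θ₀) :=
    hlim.comp ((strictMono_id.const_mul two_pos).add_const 1).tendsto_atTop
  have hdisj (m n : ℕ) : u (2 * m) ≠ u (2 * n + 1) := fun h => by
    have := hinj h
    omega
  have hmeet : insert θ₀ (range fun n => u (2 * n)) ∩ insert θ₀ (range fun n => u (2 * n + 1)) =
      {θ₀} := by
    rw [← insert_inter_distrib, (disjoint_range_iff.2 hdisj).inter_eq, insert_empty_eq]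
  refine ⟨_, _, isOscillation_of_isClosed heven.isCompact_insert_range.isClosed
    hodd.isCompact_insert_range.isClosed hmeet
    (mem_closure_of_tendsto heven (Eventually.of_forall fun n => ?_))
    (mem_closure_of_tendsto hodd (Eventually.of_forall fun n => ?_))⟩
  · refine ⟨mem_insert_of_mem _ (mem_range_self n), ?_⟩
    rintro (h | ⟨m, h⟩)
    exacts [hne _ h, hdisj n m h.symm]
  · refine ⟨mem_insert_of_mem _ (mem_range_self n), ?_⟩
    rintro (h | ⟨m, h⟩)
    exacts [hne _ h, hdisj m n h]

end Oscillation

section ClampedQuotient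

/-- `s` is a value of the quotient `v / d` clamped to `[-1, 1]`. For `d > 0` this determines `s`,
while for `d = v = 0` it allows every `s`. The formulation as a variational inequality makes
the relation closed in `(d, v, s)` and avoids division by zero. -/
def IsClampedQuotient (d v : ℝ) (s : Icc (-1 : ℝ) 1) : Prop :=
  ∀ t : Icc (-1 : ℝ) 1, (v - s * d) * (t - s) ≤ 0

theorem isClampedQuotient_zero_zero (s : Icc (-1 : ℝ) 1) : IsClampedQuotient 0 0 s := fun t => by
  simp

theorem exists_isClampedQuotient {d : ℝ} (hd : 0 ≤ d) (v : ℝ) :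
    ∃ s, IsClampedQuotient d v s := by
  rcases le_total d v with hv | hv
  · exact ⟨⟨1, by simp⟩, fun t => mul_nonpos_of_nonneg_of_nonpos (by linarith)
      (sub_nonpos.2 t.2.2)⟩
  rcases le_total v (-d) with hv' | hv'
  · exact ⟨⟨-1, by simp⟩, fun t => mul_nonpos_of_nonpos_of_nonneg (by linarith)
      (sub_nonneg.2 t.2.1)⟩
  rcases hd.eq_or_lt with rfl | hd
  · obtain rfl : v = 0 := le_antisymm hv (by simpa using hv')
    exact ⟨⟨0, by simp⟩, isClampedQuotient_zero_zero _⟩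
  · refine ⟨⟨v / d, (le_div_iff₀ hd).2 (by linarith), (div_le_one hd).2 hv⟩, fun t => ?_⟩
    simp [div_mul_cancel₀ v hd.ne']

namespace IsClampedQuotient

variable {d v v' : ℝ} {s s' : Icc (-1 : ℝ) 1}

theorem le_of_lt (hs : IsClampedQuotient d v s) (hs' : IsClampedQuotient d v' s') (hd : 0 ≤ d)
    (hv : v < v') : s ≤ s' := by
  by_contra! hlt
  have hsub : (0 : ℝ) < s - s' := sub_pos.2 hlt
  nlinarith [hs s', hs' s, mul_nonneg hd hsub.le]

theorem eq_one (hs : IsClampedQuotient d v s) (hd : 0 ≤ d) (hv : d < v) : (s : ℝ) = 1 := by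
  refine s.2.2.antisymm (not_lt.1 fun hlt => ?_)
  have hone : (v - s * d) * (1 - s) ≤ 0 := hs ⟨1, by simp⟩
  nlinarith [mul_le_of_le_one_left hd s.2.2]

theorem eq_neg_one (hs : IsClampedQuotient d v s) (hd : 0 ≤ d) (hv : v < -d) :
    (s : ℝ) = -1 := by
  refine le_antisymm (not_lt.1 fun hlt => ?_) s.2.1
  have hone : (v - s * d) * (-1 - s) ≤ 0 := hs ⟨-1, by simp⟩
  nlinarith [mul_le_mul_of_nonneg_right s.2.1 hd]

theorem eq_zero_of_ne (hs : IsClampedQuotient d v s) (hs' : IsClampedQuotient d v s')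
    (hd : 0 ≤ d) (hne : s ≠ s') : d = 0 ∧ v = 0 := by
  wlog hlt : s < s' generalizing s s'
  · exact this hs' hs hne.symm (hne.lt_or_gt.resolve_left hlt)
  have hsub : (0 : ℝ) < s' - s := sub_pos.2 hlt
  have hle : v ≤ s * d := by nlinarith [hs s']
  have hge : s' * d ≤ v := by nlinarith [hs' s]
  obtain rfl : d = 0 := le_antisymm (by nlinarith) hd
  exact ⟨rfl, by linarith⟩

end IsClampedQuotient

theorem isPreconnected_setOf_isClampedQuotient {d : ℝ} (hd : 0 ≤ d) (v : ℝ) :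
    IsPreconnected {s | IsClampedQuotient d v s} := by
  by_cases hzero : d = 0 ∧ v = 0
  · have huniv : {s | IsClampedQuotient d v s} = univ :=
      eq_univ_of_forall fun s => hzero.1 ▸ hzero.2 ▸ isClampedQuotient_zero_zero s
    have : PreconnectedSpace (Icc (-1 : ℝ) 1) := Subtype.preconnectedSpace isPreconnected_Icc
    exact huniv ▸ isPreconnected_univ
  · exact Set.Subsingleton.isPreconnected fun s hs s' hs' =>
      not_imp_comm.1 (hs.eq_zero_of_ne hs' hd) hzero

theorem isClosed_setOf_isClampedQuotient {X : Type*} [TopologicalSpace X] {d v : X → ℝ}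
    {s : X → Icc (-1 : ℝ) 1} (hd : Continuous d) (hv : Continuous v) (hs : Continuous s) :
    IsClosed {x | IsClampedQuotient (d x) (v x) (s x)} := by
  simp only [IsClampedQuotient, ofPred_forall]
  exact isClosed_iInter fun t => isClosed_le (by fun_prop) continuous_const

end ClampedQuotient

section BlowUp

variable {Θ ι : Type*} [TopologicalSpace Θ] {a b : ℝ}

/-- The data of a blow-up of `Θ × [a, b]` at the points `center i`: near the fibre of `center i` the
coordinate `height i / gauge i` is to be added to the space, `gauge i` being a function of the base
which vanishes only below `center i` and `height i` a fibre coordinate vanishing at `center i`. -/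
structure BlowUpDatum (Θ ι : Type*) [TopologicalSpace Θ] (a b : ℝ) where
  lt : a < b
  center : ι → Θ × Icc a b
  center_injective : Injective center
  center_mem_Ioo : ∀ i, ((center i).2 : ℝ) ∈ Ioo a b
  gauge : ι → Θ → ℝ
  continuous_gauge : ∀ i, Continuous (gauge i)
  gauge_nonneg : ∀ i θ, 0 ≤ gauge i θ
  gauge_eq_zero_iff : ∀ i θ, gauge i θ = 0 ↔ θ = (center i).1
  height : ι → Θ × Icc a b → ℝ
  continuous_height : ∀ i, Continuous (height i)
  strictMono_height : ∀ i θ, StrictMono fun y => height i (θ, y)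
  height_center : ∀ i, height i (center i) = 0

namespace BlowUpDatum

variable (B : BlowUpDatum Θ ι a b)

/-- The blown-up space: points of `Θ × [a, b]` together with values of all the clamped quotients
`height i / gauge i`. Only over `center i` the `i`-th of these is arbitrary. -/
def Space : Set (Θ × Icc a b × (ι → Icc (-1 : ℝ) 1)) :=
  {z | ∀ i, IsClampedQuotient (B.gauge i z.1) (B.height i (z.1, z.2.1)) (z.2.2 i)}

/-- The projection of the blown-up space to `Θ × [a, b]`. -/
def proj (z : B.Space) : Θ × Icc a b := (z.1.1, z.1.2.1)

theorem isClosed_space : IsClosed B.Space := by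
  simp only [Space, ofPred_forall]
  exact isClosed_iInter fun i => isClosed_setOf_isClampedQuotient
    ((B.continuous_gauge i).comp continuous_fst)
    ((B.continuous_height i).comp (by fun_prop)) (by fun_prop)

instance [CompactSpace Θ] : CompactSpace B.Space :=
  isCompact_iff_compactSpace.1 B.isClosed_space.isCompact

theorem continuous_proj : Continuous B.proj := by
  unfold proj
  fun_prop

theorem surjective_proj : Surjective B.proj := fun p => by
  choose s hs using fun i => exists_isClampedQuotient (B.gauge_nonneg i p.1) (B.height i p)
  exact ⟨⟨(p.1, p.2, s), hs⟩, rfl⟩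

variable {B}

theorem gauge_eq_zero_and_height_eq_zero_iff {i : ι} {p : Θ × Icc a b} :
    B.gauge i p.1 = 0 ∧ B.height i p = 0 ↔ p = B.center i := by
  refine ⟨fun ⟨hgauge, hheight⟩ => ?_, ?_⟩
  · obtain ⟨θ, y⟩ := p
    obtain rfl := (B.gauge_eq_zero_iff i θ).1 hgauge
    rw [(B.strictMono_height i _).injective (hheight.trans (B.height_center i).symm)]
  · rintro rfl
    exact ⟨(B.gauge_eq_zero_iff i _).2 rfl, B.height_center i⟩

theorem proj_eq_center_of_ne {z w : B.Space} (hzw : B.proj z = B.proj w) {i : ι}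
    (hi : z.1.2.2 i ≠ w.1.2.2 i) : B.proj z = B.center i := by
  refine gauge_eq_zero_and_height_eq_zero_iff.1 ((z.2 i).eq_zero_of_ne ?_ (B.gauge_nonneg i _) hi)
  have hw : IsClampedQuotient (B.gauge i (B.proj w).1) (B.height i (B.proj w)) (w.1.2.2 i) := w.2 i
  rwa [← hzw] at hw

theorem apply_eq_of_proj_eq {z w : B.Space} (hzw : B.proj z = B.proj w) {i : ι}
    (hi : B.proj z ≠ B.center i) : z.1.2.2 i = w.1.2.2 i :=
  not_imp_comm.1 (proj_eq_center_of_ne hzw) hi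

theorem eq_of_proj_eq {z w : B.Space} (hzw : B.proj z = B.proj w)
    (hz : B.proj z ∉ range B.center) : z = w := by
  have hs : z.1.2.2 = w.1.2.2 :=
    funext fun i => apply_eq_of_proj_eq hzw fun h => hz ⟨i, h.symm⟩
  exact Subtype.ext (Prod.ext (Prod.ext_iff.1 hzw).1 (Prod.ext (Prod.ext_iff.1 hzw).2 hs))

theorem mem_space_update [DecidableEq ι] {z : B.Space} {i : ι} (hz : B.proj z = B.center i)
    (s : Icc (-1 : ℝ) 1) : (z.1.1, z.1.2.1, update z.1.2.2 i s) ∈ B.Space := by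
  intro j
  rcases eq_or_ne j i with rfl | hj
  · obtain ⟨hgauge, hheight⟩ := gauge_eq_zero_and_height_eq_zero_iff.2 hz
    simpa only [show B.gauge j z.1.1 = 0 from hgauge,
      show B.height j (z.1.1, z.1.2.1) = 0 from hheight] using isClampedQuotient_zero_zero _
  · simpa only [update_of_ne hj] using z.2 j

theorem le_total_of_fst_eq {z w : B.Space} (hzw : z.1.1 = w.1.1) :
    z.1.2 ≤ w.1.2 ∨ w.1.2 ≤ z.1.2 := by
  have hle {z w : B.Space} (hzw : z.1.1 = w.1.1) (hlt : z.1.2.1 < w.1.2.1) :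
      z.1.2 ≤ w.1.2 := by
    refine ⟨hlt.le, fun i => (z.2 i).le_of_lt ?_ (B.gauge_nonneg i _)
      (B.strictMono_height i z.1.1 hlt)⟩
    have hw := w.2 i
    rwa [← hzw] at hw
  rcases lt_trichotomy z.1.2.1 w.1.2.1 with hlt | heq | hgt
  · exact Or.inl (hle hzw hlt)
  · have hproj : B.proj z = B.proj w := Prod.ext hzw heq
    by_cases hz : B.proj z ∈ range B.center
    · obtain ⟨i, hi⟩ := hz
      have hother (j : ι) (hj : j ≠ i) : z.1.2.2 j = w.1.2.2 j :=
        apply_eq_of_proj_eq hproj (hi ▸ B.center_injective.ne hj.symm)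
      refine (le_total (z.1.2.2 i) (w.1.2.2 i)).imp (fun h => ⟨heq.le, fun j => ?_⟩)
        fun h => ⟨heq.ge, fun j => ?_⟩ <;> rcases eq_or_ne j i with rfl | hj
      exacts [h, (hother j hj).le, h, (hother j hj).ge]
    · exact Or.inl (eq_of_proj_eq hproj hz ▸ le_rfl)
  · exact Or.inr (hle hzw.symm hgt)

theorem le_of_fst_eq_of_le {z w : B.Space} (hzw : z.1.1 = w.1.1) (hle : z.1.2.1 ≤ w.1.2.1)
    (hcenter : B.proj z = B.proj w → B.proj z ∉ range B.center) : z.1.2 ≤ w.1.2 := by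
  refine (le_total_of_fst_eq hzw).elim id fun hge => ?_
  have hproj : B.proj z = B.proj w := Prod.ext hzw (hle.antisymm hge.1)
  exact (eq_of_proj_eq hproj (hcenter hproj)) ▸ le_rfl

theorem lt_or_lt_of_fst_eq {z w : B.Space} (hzw : z.1.1 = w.1.1) (hne : z ≠ w) :
    z.1.2 < w.1.2 ∨ w.1.2 < z.1.2 := by
  have hne' : z.1.2 ≠ w.1.2 := fun h => hne (Subtype.ext (Prod.ext hzw h))
  exact (le_total_of_fst_eq hzw).imp (·.lt_of_ne hne') (·.lt_of_ne hne'.symm)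

variable (B)

theorem isConnected_preimage_proj (p : Θ × Icc a b) : IsConnected (B.proj ⁻¹' {p}) := by
  have himage : Subtype.val '' (B.proj ⁻¹' {p}) = {p.1} ×ˢ {p.2} ×ˢ
      univ.pi fun i => {s | IsClampedQuotient (B.gauge i p.1) (B.height i p) s} := by
    ext ⟨θ, y, s⟩
    simp only [mem_image, mem_preimage, mem_singleton_iff, mem_prod, mem_univ_pi, mem_ofPred_eq]
    constructor
    · rintro ⟨z, rfl, hz⟩
      obtain ⟨rfl, rfl, rfl⟩ : z.1.1 = θ ∧ z.1.2.1 = y ∧ z.1.2.2 = s := by simp [hz]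
      exact ⟨rfl, rfl, z.2⟩
    · rintro ⟨rfl, rfl, hs⟩
      exact ⟨⟨(p.1, p.2, s), hs⟩, rfl, rfl⟩
  refine ⟨B.surjective_proj p, ?_⟩
  rw [← IsInducing.subtypeVal.isPreconnected_image, himage]
  exact isPreconnected_singleton.prod (isPreconnected_singleton.prod (isPreconnected_univ_pi
    fun i => isPreconnected_setOf_isClampedQuotient (B.gauge_nonneg i _) _))

variable [CompactSpace Θ] [T2Space Θ]

theorem isConnected_setOf_fst_eq (θ : Θ) :
    IsConnected {z : B.Space | z.1.1 = θ} := by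
  have hfiber : {z : B.Space | z.1.1 = θ} = B.proj ⁻¹' ({θ} ×ˢ univ) := by
    ext z
    simp [proj]
  have : ConnectedSpace (Icc a b) :=
    Subtype.connectedSpace (isConnected_Icc B.lt.le)
  rw [hfiber]
  exact (B.continuous_proj.isClosedMap.isQuotientMap B.continuous_proj
    B.surjective_proj).isCoinducing.isConnected_preimage_of_isClosed B.isConnected_preimage_proj
    (isClosed_singleton.prod isClosed_univ) (isConnected_singleton.prod isConnected_univ)

theorem exists_continuous_section {y : Icc a b}
    (hy : ∀ i, (B.center i).2 ≠ y) :
    ∃ σ : Θ → B.Space, Continuous σ ∧ ∀ θ, B.proj (σ θ) = (θ, y) := by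
  let E : Set B.Space := {z | z.1.2.1 = y}
  have : CompactSpace E := isCompact_iff_compactSpace.1
    (isClosed_eq (by fun_prop) continuous_const).isCompact
  have hbij : Bijective fun z : E => z.1.1.1 := by
    refine ⟨fun z w hzw => Subtype.ext (eq_of_proj_eq (Prod.ext hzw (z.2.trans w.2.symm)) ?_),
      fun θ => ?_⟩
    · rintro ⟨i, hi⟩
      exact hy i (hi ▸ z.2)
    · obtain ⟨z, hz⟩ := B.surjective_proj (θ, y)
      exact ⟨⟨z, congrArg Prod.snd hz⟩, congrArg Prod.fst hz⟩
  let e : E ≃ₜ Θ := Continuous.homeoOfEquivCompactToT2 (f := Equiv.ofBijective _ hbij)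
    (continuous_fst.comp (continuous_subtype_val.comp continuous_subtype_val))
  exact ⟨fun θ => (e.symm θ).1, by fun_prop,
    fun θ => Prod.ext (e.apply_symm_apply θ) (e.symm θ).2⟩

theorem exists_continuous_fiber_bounds : ∃ lo hi : Θ → B.Space, Continuous lo ∧ Continuous hi ∧
    (∀ θ, (lo θ).1.1 = θ ∧ (hi θ).1.1 = θ ∧ (lo θ).1.2 < (hi θ).1.2) ∧
    ∀ z : B.Space, z.1.2 ∈ Icc (lo z.1.1).1.2 (hi z.1.1).1.2 := by
  let bot : Icc a b := ⟨a, left_mem_Icc.2 B.lt.le⟩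
  let top : Icc a b := ⟨b, right_mem_Icc.2 B.lt.le⟩
  have hbot (i : ι) : (B.center i).2 ≠ bot :=
    fun h => (B.center_mem_Ioo i).1.ne' (congrArg Subtype.val h)
  have htop (i : ι) : (B.center i).2 ≠ top :=
    fun h => (B.center_mem_Ioo i).2.ne (congrArg Subtype.val h)
  obtain ⟨lo, hlo, hlo_proj⟩ := B.exists_continuous_section hbot
  obtain ⟨hi, hhi, hhi_proj⟩ := B.exists_continuous_section htop
  have hlo_bound (z : B.Space) : (lo z.1.1).1.2 ≤ z.1.2 := by
    obtain ⟨hfst, hsnd⟩ := Prod.ext_iff.1 (hlo_proj z.1.1)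
    refine le_of_fst_eq_of_le hfst (hsnd.trans_le z.1.2.1.2.1) fun _ => ?_
    rintro ⟨i, hcenter⟩
    exact hbot i (by rw [hcenter, hlo_proj])
  have hhi_bound (z : B.Space) : z.1.2 ≤ (hi z.1.1).1.2 := by
    obtain ⟨hfst, hsnd⟩ := Prod.ext_iff.1 (hhi_proj z.1.1)
    refine le_of_fst_eq_of_le hfst.symm (le_of_le_of_eq z.1.2.1.2.2 hsnd.symm) fun hproj => ?_
    rintro ⟨i, hcenter⟩
    exact htop i (by rw [hcenter, hproj, hhi_proj])
  refine ⟨lo, hi, hlo, hhi, fun θ => ?_, fun z => ⟨hlo_bound z, hhi_bound z⟩⟩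
  obtain ⟨hlo_fst, hlo_snd⟩ := Prod.ext_iff.1 (hlo_proj θ)
  obtain ⟨hhi_fst, hhi_snd⟩ := Prod.ext_iff.1 (hhi_proj θ)
  have hle : (lo (hi θ).1.1).1.2 ≤ (hi θ).1.2 := hlo_bound (hi θ)
  rw [show (hi θ).1.1 = θ from hhi_fst] at hle
  refine ⟨hlo_fst, hhi_fst, hle.lt_of_ne fun h => B.lt.ne ?_⟩
  exact congrArg Subtype.val ((hlo_snd.symm.trans (congrArg Prod.fst h)).trans hhi_snd)

end BlowUpDatum

end BlowUp

section Flattening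

theorem exists_continuous_strictMono_pi_Icc (ι : Type*) [Countable ι] :
    ∃ P : (ι → Icc (-1 : ℝ) 1) → ℝ, Continuous P ∧ StrictMono P := by
  have : Encodable ι := Encodable.ofCountable ι
  obtain ⟨weight, hpos, _, hsum, -⟩ := posSumOfEncodable one_pos ι
  have hbound (i : ι) (s : ι → Icc (-1 : ℝ) 1) : ‖weight i * s i‖ ≤ weight i := by
    rw [norm_mul, Real.norm_of_nonneg (hpos i).le]
    exact mul_le_of_le_one_right (hpos i).le (abs_le.2 (s i).2)
  have hsummable (s : ι → Icc (-1 : ℝ) 1) : Summable fun i => weight i * (s i : ℝ) :=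
    hsum.summable.of_norm_bounded (hbound · s)
  refine ⟨fun s => ∑' i, weight i * s i,
    continuous_tsum (fun i => by fun_prop) hsum.summable hbound, fun s t hst => ?_⟩
  obtain ⟨hle, i, hi⟩ := Pi.lt_def.1 hst
  exact Summable.tsum_lt_tsum (fun j => mul_le_mul_of_nonneg_left (hle j) (hpos j).le)
    (mul_lt_mul_of_pos_left hi (hpos i)) (hsummable s) (hsummable t)

theorem exists_homeomorph_prod_Icc {Z Θ : Type*} [TopologicalSpace Z] [CompactSpace Z]
    [TopologicalSpace Θ] [T2Space Θ] {a b : ℝ} (hab : a < b) {π : Z → Θ} {P : Z → ℝ}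
    {L U : Θ → ℝ} (hπ : Continuous π) (hP : Continuous P)
    (hinj : ∀ z w, π z = π w → P z = P w → z = w) (hL : Continuous L) (hU : Continuous U)
    (hLU : ∀ θ, L θ < U θ) (himage : ∀ θ, P '' (π ⁻¹' {θ}) = Icc (L θ) (U θ)) :
    ∃ Φ : Z ≃ₜ Θ × Icc a b, (∀ z, (Φ z).1 = π z) ∧
      ∀ z w, π z = π w → ((Φ z).2 < (Φ w).2 ↔ P z < P w) := by
  let t (z : Z) : ℝ := (P z - L (π z)) / (U (π z) - L (π z))
  have hwidth (θ : Θ) : 0 < U θ - L θ := sub_pos.2 (hLU θ)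
  have ht_cont : Continuous t := by
    have hne (z : Z) : U (π z) - L (π z) ≠ 0 := (hwidth _).ne'
    fun_prop (disch := assumption)
  have ht_mem (z : Z) : t z ∈ Icc (0 : ℝ) 1 := by
    obtain ⟨hLz, hUz⟩ := (himage (π z)).subset (mem_image_of_mem P rfl)
    exact ⟨div_nonneg (sub_nonneg.2 hLz) (hwidth _).le,
      (div_le_one (hwidth _)).2 (sub_le_sub_right hUz _)⟩
  have ht_lt {z w : Z} (hzw : π z = π w) : t z < t w ↔ P z < P w := by
    simp only [t, hzw, div_lt_div_iff_of_pos_right (hwidth _), sub_lt_sub_iff_right]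
  let φ (z : Z) : Θ × Icc a b := (π z, (iccHomeoI a b hab).symm ⟨t z, ht_mem z⟩)
  have hφ_lt {z w : Z} (hzw : π z = π w) : (φ z).2 < (φ w).2 ↔ P z < P w := by
    rw [← ht_lt hzw, ← Subtype.coe_lt_coe, iccHomeoI_symm_apply_coe, iccHomeoI_symm_apply_coe,
      add_lt_add_iff_right, mul_lt_mul_iff_right₀ (sub_pos.2 hab)]
  have hbij : Bijective φ := by
    refine ⟨fun z w hzw => ?_, fun ⟨θ, y⟩ => ?_⟩
    · obtain ⟨hπ_eq, hsnd⟩ := Prod.ext_iff.1 hzw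
      exact hinj z w hπ_eq (le_antisymm (not_lt.1 ((hφ_lt hπ_eq.symm).not.1 hsnd.not_gt))
        (not_lt.1 ((hφ_lt hπ_eq).not.1 hsnd.not_lt)))
    · let x : unitInterval := iccHomeoI a b hab y
      have hx : L θ + x * (U θ - L θ) ∈ Icc (L θ) (U θ) := by
        constructor <;> nlinarith [x.2.1, x.2.2, hwidth θ]
      obtain ⟨z, rfl, hz⟩ := (himage θ).superset hx
      have htz : t z = x := by
        simp only [t, hz, add_sub_cancel_left, mul_div_cancel_right₀ _ (hwidth (π z)).ne']
      exact ⟨z, Prod.ext rfl ((iccHomeoI a b hab).symm_apply_eq.2 (Subtype.ext htz))⟩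
  exact ⟨Continuous.homeoOfEquivCompactToT2 (f := Equiv.ofBijective φ hbij)
    (hπ.prodMk ((iccHomeoI a b hab).symm.continuous.comp (ht_cont.subtype_mk _))),
    fun z => rfl, fun z w => hφ_lt⟩

namespace BlowUpDatum

variable {Θ ι : Type*} [TopologicalSpace Θ] [CompactSpace Θ] [T2Space Θ] [Countable ι] {a b : ℝ}
  (B : BlowUpDatum Θ ι a b)

theorem exists_flattening : ∃ Φ : B.Space ≃ₜ Θ × Icc a b, (∀ z, (Φ z).1 = z.1.1) ∧
    ∀ z w, z.1.1 = w.1.1 → ((Φ z).2 < (Φ w).2 ↔ z.1.2 < w.1.2) := by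
  obtain ⟨P, hP, hP_mono⟩ := exists_continuous_strictMono_pi_Icc ι
  let Q (q : Icc a b × (ι → Icc (-1 : ℝ) 1)) : ℝ := q.1 + P q.2
  have hQ : Continuous Q := by fun_prop
  have hQ_mono : StrictMono Q := fun q r hqr => (Prod.lt_iff.1 hqr).elim
    (fun h => add_lt_add_of_lt_of_le h.1 (hP_mono.monotone h.2))
    fun h => add_lt_add_of_le_of_lt h.1 (hP_mono h.2)
  have hQ_lt {z w : B.Space} (hzw : z.1.1 = w.1.1) : Q z.1.2 < Q w.1.2 ↔ z.1.2 < w.1.2 := by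
    refine ⟨fun h => ?_, fun h => hQ_mono h⟩
    have hne : z ≠ w := fun h' => h.ne (h' ▸ rfl)
    exact (lt_or_lt_of_fst_eq hzw hne).resolve_right fun h' => h.not_gt (hQ_mono h')
  obtain ⟨lo, hi, hlo, hhi, hlo_hi, hmem⟩ := B.exists_continuous_fiber_bounds
  have himage (θ : Θ) : (fun z : B.Space => Q z.1.2) '' ((fun z => z.1.1) ⁻¹' {θ}) =
      Icc (Q (lo θ).1.2) (Q (hi θ).1.2) := by
    refine subset_antisymm ?_ (((B.isConnected_setOf_fst_eq θ).isPreconnected.image _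
      (by fun_prop)).Icc_subset (mem_image_of_mem _ (hlo_hi θ).1)
        (mem_image_of_mem _ (hlo_hi θ).2.1))
    rintro _ ⟨z, rfl, rfl⟩
    exact ⟨hQ_mono.monotone (hmem z).1, hQ_mono.monotone (hmem z).2⟩
  obtain ⟨Φ, hfst, hlt⟩ := exists_homeomorph_prod_Icc B.lt (by fun_prop) (by fun_prop)
    (fun z w hzw h => by_contra fun hne => (lt_or_lt_of_fst_eq hzw hne).elim
      (fun h' => (hQ_mono h').ne h) fun h' => (hQ_mono h').ne' h)
    (by fun_prop) (by fun_prop) (fun θ => hQ_mono (hlo_hi θ).2.2) himage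
  exact ⟨Φ, hfst, fun z w hzw => (hlt z w hzw).trans (hQ_lt hzw)⟩

/-- A homeomorphism from the blown-up space back to `Θ × [a, b]`, over `Θ` and increasing in the
fibres. -/
def flatten : B.Space ≃ₜ Θ × Icc a b := B.exists_flattening.choose

theorem flatten_fst (z : B.Space) : (B.flatten z).1 = z.1.1 := B.exists_flattening.choose_spec.1 z

theorem flatten_symm_fst (p : Θ × Icc a b) : (B.flatten.symm p).1.1 = p.1 := by
  rw [← flatten_fst, Homeomorph.apply_symm_apply]

theorem flatten_symm_lt_iff {θ : Θ} {x y : Icc a b} :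
    (B.flatten.symm (θ, x)).1.2 < (B.flatten.symm (θ, y)).1.2 ↔ x < y := by
  have h := B.exists_flattening.choose_spec.2 (B.flatten.symm (θ, x)) (B.flatten.symm (θ, y))
    (by simp only [flatten_symm_fst])
  exact h.symm.trans (by rw [← flatten, Homeomorph.apply_symm_apply, Homeomorph.apply_symm_apply])

/-- The projection of the blown-up space to `Θ × [a, b]`, transported to a self-map of `Θ × [a, b]`
by flattening. -/
def collapse (p : Θ × Icc a b) : Θ × Icc a b := B.proj (B.flatten.symm p)

theorem collapse_fst (p : Θ × Icc a b) : (B.collapse p).1 = p.1 := B.flatten_symm_fst p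

/-- The `i`-th clamped quotient, as a function on the flattened blown-up space. -/
def coord (i : ι) (p : Θ × Icc a b) : Icc (-1 : ℝ) 1 := (B.flatten.symm p).1.2.2 i

theorem continuous_coord (i : ι) : Continuous (B.coord i) := by
  unfold coord
  fun_prop

theorem isClampedQuotient_coord (i : ι) (p : Θ × Icc a b) :
    IsClampedQuotient (B.gauge i p.1) (B.height i (B.collapse p)) (B.coord i p) := by
  have h : IsClampedQuotient (B.gauge i (B.collapse p).1) (B.height i (B.collapse p))
    (B.coord i p) := (B.flatten.symm p).2 i
  rwa [collapse_fst] at h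

theorem continuous_collapse : Continuous B.collapse :=
  B.continuous_proj.comp B.flatten.symm.continuous

theorem surjective_collapse : Surjective B.collapse :=
  B.surjective_proj.comp B.flatten.symm.surjective

theorem monotone_collapse (θ : Θ) : Monotone fun x => (B.collapse (θ, x)).2 :=
  monotone_iff_forall_lt.2 fun _ _ h => (B.flatten_symm_lt_iff.2 h).le.1

variable {B}

theorem eq_of_collapse_eq {p q : Θ × Icc a b} (hpq : B.collapse p = B.collapse q)
    (hp : B.collapse p ∉ range B.center) : p = q :=
  B.flatten.symm.injective (eq_of_proj_eq hpq hp)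

theorem collapse_preimage_of_notMem {p : Θ × Icc a b} (hp : p ∉ range B.center) :
    ∃ x, B.collapse ⁻¹' {p} = {(p.1, x)} := by
  obtain ⟨⟨θ, x⟩, rfl⟩ := B.surjective_collapse p
  refine ⟨x, eq_singleton_iff_unique_mem.2 ?_⟩
  rw [collapse_fst]
  exact ⟨rfl, fun q hq => eq_of_collapse_eq hq (mem_singleton_iff.1 hq ▸ hp)⟩

theorem nontrivial_collapse_preimage_center (i : ι) :
    {x | B.collapse ((B.center i).1, x) = B.center i}.Nontrivial := by
  classical
  obtain ⟨z, hz⟩ := B.surjective_proj (B.center i)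
  let w (s : Icc (-1 : ℝ) 1) : B.Space := ⟨_, mem_space_update hz s⟩
  have hw_collapse (s) : B.collapse (B.flatten (w s)) = B.center i := by
    rw [collapse, Homeomorph.symm_apply_apply, ← hz]
    rfl
  have hw_fst (s) : (B.flatten (w s)).1 = (B.center i).1 := by
    rw [← B.collapse_fst, hw_collapse]
  have hw_mem (s) : (B.flatten (w s)).2 ∈ {x | B.collapse ((B.center i).1, x) = B.center i} := by
    rw [mem_ofPred_eq, ← hw_fst s]
    exact hw_collapse s
  refine ⟨_, hw_mem ⟨-1, by simp⟩, _, hw_mem ⟨1, by simp⟩, fun h => ?_⟩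
  have hw := B.flatten.injective (Prod.ext ((hw_fst _).trans (hw_fst _).symm) h)
  have hcoord := congrArg (fun z : B.Space => (z.1.2.2 i : ℝ)) hw
  simp only [w, update_self] at hcoord
  norm_num at hcoord

theorem collapse_preimage_center (i : ι) :
    ∃ x₁ x₂, x₁ < x₂ ∧ B.collapse ⁻¹' {B.center i} = {(B.center i).1} ×ˢ Icc x₁ x₂ := by
  let S := {x | B.collapse ((B.center i).1, x) = B.center i}
  have hS : S.Nontrivial := nontrivial_collapse_preimage_center i
  have hS_compact : IsCompact S := (isClosed_eq
    (B.continuous_collapse.comp (Continuous.prodMk_right _)) continuous_const).isCompact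
  obtain ⟨x₁, hx₁, hle₁⟩ := hS_compact.exists_isLeast hS.nonempty
  obtain ⟨x₂, hx₂, hle₂⟩ := hS_compact.exists_isGreatest hS.nonempty
  obtain ⟨x, hx, y, hy, hlt⟩ := hS.exists_lt
  have hsnd {x} (hx : x ∈ S) : (B.collapse ((B.center i).1, x)).2 = (B.center i).2 :=
    congrArg Prod.snd hx
  refine ⟨x₁, x₂, (hle₁ hx).trans_lt (hlt.trans_le (hle₂ hy)), ?_⟩
  ext ⟨θ, x⟩
  simp only [mem_preimage, mem_singleton_iff, mem_prod, mem_Icc]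
  constructor
  · intro h
    obtain rfl : θ = (B.center i).1 := by rw [← h, collapse_fst]
    exact ⟨rfl, hle₁ h, hle₂ h⟩
  · rintro ⟨rfl, h₁, h₂⟩
    refine Prod.ext (B.collapse_fst _) (le_antisymm ?_ ?_)
    · exact (B.monotone_collapse _ h₂).trans_eq (hsnd hx₂)
    · exact (hsnd hx₁).symm.trans_le (B.monotone_collapse _ h₁)

theorem tendsto_uniformity_of_eventuallyEq {α X : Type*} [UniformSpace X] {l : Filter α}
    {u v : α → X} (h : u =ᶠ[l] v) : Tendsto (fun m => (u m, v m)) l (uniformity X) :=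
  (tendsto_diag_uniformity u l).congr' (h.mono fun _ hm => congrArg _ hm)

theorem tendsto_dist_of_collapse_eq_center {Θ : Type*} [MetricSpace Θ] [CompactSpace Θ]
    {B : BlowUpDatum Θ ι a b} {i : ℕ → ι} (hi : Injective i) {u v : ℕ → Θ × Icc a b}
    (hu : ∀ m, B.collapse (u m) = B.center (i m)) (hv : ∀ m, B.collapse (v m) = B.center (i m)) :
    Tendsto (fun m => dist (u m) (v m)) atTop (𝓝 0) := by
  have huv (m : ℕ) : B.collapse (u m) = B.collapse (v m) := (hu m).trans (hv m).symm
  have hcoord (j : ι) : ∀ᶠ m in atTop, B.coord j (u m) = B.coord j (v m) := by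
    filter_upwards [(Nat.cofinite_eq_atTop ▸ hi.tendsto_cofinite :
      Tendsto i atTop cofinite).eventually (eventually_cofinite_ne j)] with m hm
    exact apply_eq_of_proj_eq (huv m) ((hu m).trans_ne (B.center_injective.ne hm))
  have huniform : Tendsto (fun m => (B.flatten.symm (u m), B.flatten.symm (v m))) atTop
      (uniformity B.Space) := by
    have hfst (m : ℕ) : (B.flatten.symm (u m)).1.1 = (B.flatten.symm (v m)).1.1 :=
      (Prod.ext_iff.1 (huv m)).1
    have hsnd (m : ℕ) : (B.flatten.symm (u m)).1.2.1 = (B.flatten.symm (v m)).1.2.1 :=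
      (Prod.ext_iff.1 (huv m)).2
    rw [uniformity_subtype, tendsto_comap_iff, uniformity_prod, tendsto_inf, tendsto_comap_iff,
      tendsto_comap_iff, uniformity_prod, tendsto_inf, tendsto_comap_iff, tendsto_comap_iff,
      Pi.uniformity, tendsto_iInf]
    exact ⟨tendsto_uniformity_of_eventuallyEq (.of_forall hfst),
      tendsto_uniformity_of_eventuallyEq (.of_forall hsnd),
      fun j => tendsto_comap_iff.2 (tendsto_uniformity_of_eventuallyEq (hcoord j))⟩
  have hflatten := CompactSpace.uniformContinuous_of_continuous B.flatten.continuous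
  simpa only [comp_def, Homeomorph.apply_symm_apply] using
    tendsto_uniformity_iff_dist_tendsto_zero.1 (Tendsto.comp hflatten huniform)

end BlowUpDatum

end Flattening

section FiberCoordinates

variable {Θ : Type*} [TopologicalSpace Θ]

theorem exists_homeomorph_of_strictMono_fiber {Θ' R S : Type*} [TopologicalSpace Θ']
    [LinearOrder R] [TopologicalSpace R] [OrderTopology R] [LinearOrder S] [TopologicalSpace S]
    [OrderClosedTopology S] (α : Θ ≃ₜ Θ') {g : Θ × R → S} (hg : Continuous g)
    (hmono : ∀ θ, StrictMono fun x => g (θ, x)) (hsurj : ∀ θ, Surjective fun x => g (θ, x)) :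
    ∃ e : Θ × R ≃ₜ Θ' × S, ∀ p, e p = (α p.1, g p) := by
  let k (p : Θ × S) : R := ((hmono p.1).orderIsoOfSurjective _ (hsurj p.1)).symm p.2
  have hk : Continuous k := by
    refine OrderTopology.continuous_iff.2 fun c => ⟨?_, ?_⟩
    · simp only [preimage, mem_Ioi, k, OrderIso.lt_symm_apply]
      exact isOpen_lt (hg.comp (by fun_prop : Continuous fun p : Θ × S => (p.1, c))) continuous_snd
    · simp only [preimage, mem_Iio, k, OrderIso.symm_apply_lt]
      exact isOpen_lt continuous_snd (hg.comp (by fun_prop : Continuous fun p : Θ × S => (p.1, c)))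
  exact ⟨{
    toFun p := (α p.1, g p)
    invFun p := (α.symm p.1, k (α.symm p.1, p.2))
    left_inv p := by
      simp only [α.symm_apply_apply]
      exact Prod.ext rfl (((hmono p.1).orderIsoOfSurjective _ (hsurj p.1)).symm_apply_apply p.2)
    right_inv p := by
      simp only [α.apply_symm_apply]
      exact Prod.ext rfl
        (((hmono (α.symm p.1)).orderIsoOfSurjective _ (hsurj _)).apply_symm_apply p.2)
    continuous_toFun := by fun_prop
    continuous_invFun := by fun_prop }, fun p => rfl⟩

theorem strictMono_projIcc_extension {a b : ℝ} (hab : a ≤ b) {u : Icc a b → Icc a b}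
    (hu : StrictMono u) :
    StrictMono fun x => (u (projIcc a b hab x) : ℝ) + (x - projIcc a b hab x) := by
  intro x y hxy
  have hproj := monotone_projIcc hab hxy.le
  rcases hproj.eq_or_lt with heq | hlt
  · simpa only [heq, add_lt_add_iff_left, sub_lt_sub_iff_right] using hxy
  · have hcontract := (le_abs_self _).trans (abs_projIcc_sub_projIcc hab (c := y) (d := x))
    rw [abs_of_pos (sub_pos.2 hxy)] at hcontract
    have hu_lt : (u (projIcc a b hab x) : ℝ) < u (projIcc a b hab y) := hu hlt
    simp only
    linarith

theorem surjective_projIcc_extension {a b : ℝ} (hab : a ≤ b) {u : Icc a b → Icc a b}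
    (hu : Continuous u) :
    Surjective fun x => (u (projIcc a b hab x) : ℝ) + (x - projIcc a b hab x) := by
  have hcont : Continuous fun x => (u (projIcc a b hab x) : ℝ) + (x - projIcc a b hab x) := by
    fun_prop
  refine hcont.surjective
    (tendsto_atTop_mono (fun x => ?_) (tendsto_atTop_add_const_right _ (a - b) tendsto_id))
    (tendsto_atBot_mono (fun x => ?_) (tendsto_atBot_add_const_right _ (b - a) tendsto_id)) <;>
  · rw [id]
    linarith [(u (projIcc a b hab x)).2.1, (u (projIcc a b hab x)).2.2,
      (projIcc a b hab x).2.1, (projIcc a b hab x).2.2]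

theorem rel_zpow_apply_iff {X : Type*} [TopologicalSpace X] {e : X ≃ₜ X} {r : X → X → Prop}
    (hr : ∀ p q, r (e p) (e q) ↔ r p q) (n : ℤ) (p q : X) :
    r ((e ^ n) p) ((e ^ n) q) ↔ r p q := by
  induction n generalizing p q with
  | zero => rfl
  | succ n ih => rw [zpow_add_one, Homeomorph.mul_apply, Homeomorph.mul_apply, ih, hr]
  | pred n ih =>
    rw [zpow_sub_one, Homeomorph.mul_apply, Homeomorph.mul_apply, ih, ← hr,
      ← Homeomorph.mul_apply, ← Homeomorph.mul_apply, mul_inv_cancel]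
    rfl

theorem semiconj_zpow {X Y : Type*} [TopologicalSpace X] [TopologicalSpace Y] {g : X → Y}
    {α : X ≃ₜ X} {e : Y ≃ₜ Y} (h : Semiconj g α e) (n : ℤ) :
    Semiconj g ⇑(α ^ n) ⇑(e ^ n) := by
  have hinv : Semiconj g ⇑α⁻¹ ⇑e⁻¹ := fun x => e.injective (by
    rw [← h.eq, ← Homeomorph.mul_apply, ← Homeomorph.mul_apply, mul_inv_cancel, mul_inv_cancel,
      Homeomorph.one_apply, Homeomorph.one_apply])
  induction n with
  | zero => exact fun x => rfl
  | succ n ih => rw [zpow_add_one, zpow_add_one]; exact ih.comp_right h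
  | pred n ih => rw [zpow_sub_one, zpow_sub_one]; exact ih.comp_right hinv

theorem ForcedIncreasing.exists_homeomorph_extension {a b : ℝ} (hab : a ≤ b) {α : Θ ≃ₜ Θ}
    {f : Θ × Icc a b → Θ × Icc a b} (hf : ForcedIncreasing α f) :
    ∃ e : Θ × ℝ ≃ₜ Θ × ℝ, (∀ p : Θ × Icc a b, e (p.1, p.2) = ((f p).1, ((f p).2 : ℝ))) ∧
      ∀ p q, (e p).1 = (e q).1 ∧ (e p).2 < (e q).2 ↔ p.1 = q.1 ∧ p.2 < q.2 := by
  obtain ⟨hcont, hfst, hmono⟩ := hf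
  have hmono_ext θ := strictMono_projIcc_extension hab (hmono θ)
  obtain ⟨e, he⟩ := exists_homeomorph_of_strictMono_fiber α
    (g := fun p : Θ × ℝ => ((f (p.1, projIcc a b hab p.2)).2 : ℝ) + (p.2 - projIcc a b hab p.2))
    (by fun_prop) hmono_ext
    fun θ => surjective_projIcc_extension hab (u := fun x => (f (θ, x)).2) (by fun_prop)
  refine ⟨e, fun p => ?_, fun ⟨θ, x⟩ ⟨θ', y⟩ => ?_⟩
  · rw [he, projIcc_val, sub_self, add_zero, hfst]
  · simp only [he, α.injective.eq_iff]
    refine and_congr_right ?_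
    rintro rfl
    exact (hmono_ext θ).lt_iff_lt

/-- Extending `f` to a homeomorphism `e` of `Θ × ℝ`, the `n`-th coordinate of `p` is the height of
`e⁻ⁿ p` above the invariant curve. -/
theorem ForcedIncreasing.exists_fiber_coordinates {a b : ℝ} (hab : a ≤ b) {α : Θ ≃ₜ Θ}
    {f : Θ × Icc a b → Θ × Icc a b} (hf : ForcedIncreasing α f) {γ : Θ → Icc a b}
    (hγ : Continuous γ) (hγinv : ∀ θ, f (θ, γ θ) = (α θ, γ (α θ))) :
    ∃ V : ℤ → Θ × Icc a b → ℝ, (∀ n, Continuous (V n)) ∧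
      (∀ n θ, StrictMono fun x => V n (θ, x)) ∧ (∀ n θ, V n (θ, γ θ) = 0) ∧
      ∀ n p, V (n + 1) (f p) = V n p := by
  obtain ⟨e, he, he_lt⟩ := hf.exists_homeomorph_extension hab
  have hcurve : Semiconj (fun θ => (θ, (γ θ : ℝ))) α e := fun θ => by rw [he (θ, γ θ), hγinv]
  refine ⟨fun n p => ((e ^ (-n)) (p.1, p.2)).2 - γ ((e ^ (-n)) (p.1, p.2)).1, fun n => by fun_prop,
    fun n θ x y hxy => ?_, fun n θ => ?_, fun n p => ?_⟩
  · obtain ⟨hfst, hsnd⟩ := (rel_zpow_apply_iff (r := fun p q => p.1 = q.1 ∧ p.2 < q.2) he_lt (-n)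
      (θ, (x : ℝ)) (θ, (y : ℝ))).2 ⟨rfl, hxy⟩
    simpa only [hfst, sub_lt_sub_iff_right] using hsnd
  · simp only [← (semiconj_zpow hcurve (-n)).eq, sub_self]
  · simp only [← he, ← Homeomorph.mul_apply, ← zpow_add_one, neg_add, neg_add_cancel_right]

end FiberCoordinates

section Lift

namespace BlowUpDatum

variable {Θ ι : Type*} [TopologicalSpace Θ] {a b : ℝ} {B : BlowUpDatum Θ ι a b}
  {f : Θ × Icc a b → Θ × Icc a b} {σ : Equiv.Perm ι}

/-- The map `f` carries the blow-up datum at `i` to the one at `σ i`, so that it lifts to the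
blown-up space. -/
structure IsEquivariant (B : BlowUpDatum Θ ι a b) (f : Θ × Icc a b → Θ × Icc a b)
    (σ : Equiv.Perm ι) : Prop where
  gauge_apply : ∀ i p, B.gauge (σ i) (f p).1 = B.gauge i p.1
  height_apply : ∀ i p, B.height (σ i) (f p) = B.height i p

theorem apply_eq_center_iff (h : B.IsEquivariant f σ) {i : ι} {p : Θ × Icc a b} :
    f p = B.center (σ i) ↔ p = B.center i := by
  rw [← gauge_eq_zero_and_height_eq_zero_iff, ← gauge_eq_zero_and_height_eq_zero_iff,
    h.gauge_apply, h.height_apply]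

/-- The lift of `f` to the blown-up space, permuting the clamped quotients by `σ`. -/
def spaceLift (h : B.IsEquivariant f σ) (z : B.Space) : B.Space :=
  ⟨((f (B.proj z)).1, (f (B.proj z)).2, z.1.2.2 ∘ σ.symm), fun i => by
    have hgauge := h.gauge_apply (σ.symm i) (B.proj z)
    have hheight := h.height_apply (σ.symm i) (B.proj z)
    rw [σ.apply_symm_apply] at hgauge hheight
    simp only [hgauge, hheight, comp_apply]
    exact z.2 (σ.symm i)⟩

variable [CompactSpace Θ] [T2Space Θ] [Countable ι]

/-- The lift of `f` to the blown-up space, transported to a self-map of `Θ × [a, b]` by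
flattening. -/
def lift (h : B.IsEquivariant f σ) (p : Θ × Icc a b) : Θ × Icc a b :=
  B.flatten (spaceLift h (B.flatten.symm p))

theorem collapse_lift (h : B.IsEquivariant f σ) (p : Θ × Icc a b) :
    B.collapse (lift h p) = f (B.collapse p) := by
  rw [lift, collapse, Homeomorph.symm_apply_apply]
  rfl

theorem continuous_lift (h : B.IsEquivariant f σ) (hf : Continuous f) : Continuous (lift h) := by
  have hproj := B.continuous_proj
  have hspace : Continuous (spaceLift h) := by
    refine Continuous.subtype_mk ?_ _
    fun_prop
  unfold lift
  fun_prop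

theorem isFactorMap_collapse (h : B.IsEquivariant f σ) : IsFactorMap (lift h) f B.collapse :=
  ⟨B.continuous_collapse, B.surjective_collapse, funext (collapse_lift h)⟩

theorem forcedIncreasing_lift (h : B.IsEquivariant f σ) {α : Θ → Θ}
    (hf : ForcedIncreasing α f) : ForcedIncreasing α (lift h) := by
  obtain ⟨hcont, hfst, hmono⟩ := hf
  have hlift_fst (p : Θ × Icc a b) : (lift h p).1 = α p.1 := by
    rw [← B.collapse_fst, collapse_lift, hfst, B.collapse_fst]
  refine ⟨continuous_lift h hcont, hlift_fst, fun θ x y hxy => ?_⟩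
  have hsymm (x : Icc a b) : B.flatten.symm (α θ, (lift h (θ, x)).2) =
      spaceLift h (B.flatten.symm (θ, x)) := by
    rw [← hlift_fst (θ, x)]
    exact B.flatten.symm_apply_apply _
  rw [← B.flatten_symm_lt_iff (θ := α θ), hsymm, hsymm]
  have hbase (x : Icc a b) : B.proj (B.flatten.symm (θ, x)) =
      (θ, (B.flatten.symm (θ, x)).1.2.1) := Prod.ext (B.flatten_symm_fst _) rfl
  rcases Prod.lt_iff.1 (B.flatten_symm_lt_iff.2 hxy) with ⟨hlt, hle⟩ | ⟨hle, hlt⟩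
  · refine Prod.lt_iff.2 (Or.inl ⟨?_, fun i => hle _⟩)
    simpa only [spaceLift, hbase] using hmono θ hlt
  · refine Prod.lt_iff.2 (Or.inr ⟨?_, ?_⟩)
    · simpa only [spaceLift, hbase] using (hmono θ).monotone hle
    · obtain ⟨hle, i, hi⟩ := Pi.lt_def.1 hlt
      exact Pi.lt_def.2 ⟨fun j => hle _, σ i, by simpa [spaceLift] using hi⟩

end BlowUpDatum

end Lift

section ClosureOfSection

variable {X Θ : Type*} [TopologicalSpace X] [CompactSpace X] [TopologicalSpace Θ] [T2Space Θ]
  {g : X → X} {π : X → Θ} {α : Θ ≃ₜ Θ} {N : Set X}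

theorem image_closure_eq_univ (hπ : Continuous π) (hN : Dense (π '' N)) :
    π '' closure N = univ :=
  (image_closure_of_isCompact isClosed_closure.isCompact hπ.continuousOn).trans hN.closure_eq

theorem exists_mem_closure_inter_preimage (hπ : Continuous π) (hN : Dense (π '' N)) {A : Set Θ}
    (hA : IsOpen A) {θ : Θ} (hθ : θ ∈ closure A) : ∃ x ∈ closure (N ∩ π ⁻¹' A), π x = θ := by
  have hclosure : θ ∈ closure (π '' (N ∩ π ⁻¹' A)) := by
    rw [image_inter_preimage, inter_comm]
    exact closure_minimal (hN.open_subset_closure_inter hA) isClosed_closure hθ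
  rwa [← image_closure_of_isCompact isClosed_closure.isCompact hπ.continuousOn] at hclosure

theorem isMinimalSet_closure [CompactSpace Θ] [Nonempty Θ] [T2Space X] (hα : MinimalHomeo α)
    (hg : Continuous g) (hπ : Continuous π) (hsemi : Semiconj π g α) (hgN : MapsTo g N N)
    (hN : Dense (π '' N)) (hinj : ∀ x ∈ N, ∀ y ∈ closure N, π y = π x → y = x) :
    IsMinimalSet g (closure N) := by
  have hmaps : MapsTo g (closure N) (closure N) := hgN.closure hg
  have hne : (closure N).Nonempty := hN.nonempty.of_image.closure
  have hmin : ∀ M ⊆ closure N, M.Nonempty → IsClosed M → g '' M ⊆ M → M = closure N := by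
    refine fun M hM hMne hMclosed hgM => hM.antisymm (closure_minimal (fun x hx => ?_) hMclosed)
    have hπM : π '' M = univ := by
      refine hα.eq_univ_of_mapsTo (hMclosed.isCompact.image hπ).isClosed (hMne.image π) ?_
      rintro _ ⟨y, hy, rfl⟩
      exact ⟨g y, hgM (mem_image_of_mem g hy), hsemi y⟩
    obtain ⟨y, hy, hyx⟩ := hπM.symm ▸ mem_univ (π x)
    exact hinj x hx y (hM hy) hyx ▸ hy
  exact ⟨hne, isClosed_closure,
    hmin _ hmaps.image_subset (hne.image g) (isClosed_closure.isCompact.image hg).isClosed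
      (image_mono hmaps.image_subset), hmin⟩

end ClosureOfSection

theorem isAAMinimal_closure {X : Type*} {Θ : Type} [MetricSpace X] [CompactSpace X]
    [MetricSpace Θ] [CompactSpace Θ] [Nonempty Θ] {g : X → X} {π : X → Θ} {α : Θ ≃ₜ Θ} {N : Set X}
    (hα : MinimalHomeo α) (hαequi : Equicontinuous (zIter α.toEquiv)) (hg : Continuous g)
    (hπ : Continuous π) (hsemi : Semiconj π g α) (hgN : MapsTo g N N) (hN : Dense (π '' N))
    (hinj : ∀ x ∈ N, ∀ y ∈ closure N, π y = π x → y = x) : IsAAMinimal g (closure N) := by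
  refine ⟨isMinimalSet_closure hα hg hπ hsemi hgN hN hinj, fun _ => ⟨{
    Y := Θ
    g := α
    hmap := fun x => π x
    factor := ⟨by fun_prop, fun θ => ?_, funext fun x => hsemi x⟩
    a11 := hN.mono ?_
    ap := fun ε hε => ?_ }⟩⟩
  · obtain ⟨x, hx, rfl⟩ := (image_closure_eq_univ hπ hN).symm ▸ mem_univ θ
    exact ⟨⟨x, hx⟩, rfl⟩
  · rintro _ ⟨x, hx, rfl⟩
    exact ⟨⟨x, subset_closure hx⟩, rfl, fun y hy => Subtype.ext (hinj x hx y y.2 hy)⟩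
  · obtain ⟨δ, hδ, hdist⟩ := Metric.uniformEquicontinuous_iff.1
      (CompactSpace.uniformEquicontinuous_of_equicontinuous hαequi) ε hε
    exact ⟨δ, hδ, fun y y' h n => hdist y y' h n⟩

theorem IsAPMinimal.eq_of_tendsto_dist {X : Type*} [MetricSpace X] {g : X → X} {M : Set X}
    (hM : IsAPMinimal g M) {x y : X} {u v : ℕ → X} (hu : ∀ m, u m ∈ M) (hv : ∀ m, v m ∈ M)
    (hux : ∀ m, g^[m] (u m) = x) (hvy : ∀ m, g^[m] (v m) = y)
    (huv : Tendsto (fun m => dist (u m) (v m)) atTop (𝓝 0)) : x = y := by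
  have hmaps : MapsTo g M M := mapsTo_iff_image_subset.2 hM.1.2.2.1.subset
  refine dist_le_zero.1 (le_of_forall_pos_lt_add fun ε hε => ?_)
  obtain ⟨δ, hδ, hdist⟩ := hM.2 hmaps ε hε
  obtain ⟨m, hm⟩ := (huv.eventually_lt_const hδ).exists
  have hlt := hdist ⟨u m, hu m⟩ ⟨v m, hv m⟩ hm m
  rwa [Subtype.dist_eq, restrictMap, hmaps.iterate_restrict, MapsTo.val_restrict_apply,
    MapsTo.val_restrict_apply, hux, hvy, ← zero_add ε] at hlt

section BlownUpCurve

namespace BlowUpDatum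

variable {Θ ι : Type*} [TopologicalSpace Θ] [CompactSpace Θ] [T2Space Θ] [Countable ι] {a b : ℝ}
  {B : BlowUpDatum Θ ι a b} {γ : Θ → Icc a b} {f : Θ × Icc a b → Θ × Icc a b} {σ : Equiv.Perm ι}

variable (B γ) in
/-- The points of the blown-up curve `γ` which do not lie over a centre. -/
def regularCurve : Set (Θ × Icc a b) := B.collapse ⁻¹' (curveGraph γ \ range B.center)

theorem collapse_eq_of_mem_curveGraph {p : Θ × Icc a b} (hp : B.collapse p ∈ curveGraph γ) :
    B.collapse p = (p.1, γ p.1) :=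
  Prod.ext (B.collapse_fst p) (hp.trans (congrArg γ (B.collapse_fst p)))

theorem closure_regularCurve_subset (hγ : Continuous γ) :
    closure (B.regularCurve γ) ⊆ B.collapse ⁻¹' curveGraph γ :=
  closure_minimal (preimage_mono sdiff_subset)
    ((isClosed_eq continuous_snd (hγ.comp continuous_fst)).preimage B.continuous_collapse)

theorem eq_of_mem_regularCurve {p q : Θ × Icc a b} (hp : p ∈ B.regularCurve γ)
    (hq : B.collapse q ∈ curveGraph γ) (hqp : q.1 = p.1) : q = p := by
  have hcollapse : B.collapse p = B.collapse q := by
    rw [collapse_eq_of_mem_curveGraph hp.1, collapse_eq_of_mem_curveGraph hq, hqp]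
  exact (eq_of_collapse_eq hcollapse hp.2).symm

theorem dense_image_fst_regularCurve [∀ θ : Θ, (𝓝[≠] θ).NeBot] :
    Dense (Prod.fst '' B.regularCurve γ) := by
  refine (dense_compl_range_of_countable fun i => (B.center i).1).mono fun θ hθ => ?_
  obtain ⟨p, hp⟩ := B.surjective_collapse (θ, γ θ)
  refine ⟨p, ?_, by rw [← B.collapse_fst, hp]⟩
  rw [regularCurve, mem_preimage, hp]
  exact ⟨rfl, fun ⟨i, hi⟩ => hθ ⟨i, congrArg Prod.fst hi⟩⟩

theorem pinched_collapse_preimage [Nonempty Θ] [∀ θ : Θ, (𝓝[≠] θ).NeBot] :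
    Pinched (B.collapse ⁻¹' curveGraph γ) := by
  obtain ⟨p, hp⟩ := (B.dense_image_fst_regularCurve (γ := γ)).nonempty.of_image
  exact ⟨p.1, p.2, hp.1, fun y hy => congrArg Prod.snd (eq_of_mem_regularCurve hp hy rfl)⟩

theorem mapsTo_lift_regularCurve (h : B.IsEquivariant f σ)
    (hγf : MapsTo f (curveGraph γ) (curveGraph γ)) :
    MapsTo (lift h) (B.regularCurve γ) (B.regularCurve γ) := by
  rintro p ⟨hcurve, hcenter⟩
  rw [regularCurve, mem_preimage, collapse_lift]
  refine ⟨hγf hcurve, fun ⟨i, hi⟩ => hcenter ⟨σ.symm i, ?_⟩⟩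
  rw [eq_comm, ← apply_eq_center_iff h, σ.apply_symm_apply, hi]

theorem isAAMinimal_closure_regularCurve {Θ : Type} [MetricSpace Θ] [CompactSpace Θ] [Nonempty Θ]
    [∀ θ : Θ, (𝓝[≠] θ).NeBot] {B : BlowUpDatum Θ ι a b} {f : Θ × Icc a b → Θ × Icc a b}
    {γ : Θ → Icc a b} {α : Θ ≃ₜ Θ} (h : B.IsEquivariant f σ) (hα : MinimalHomeo α)
    (hαequi : Equicontinuous (zIter α.toEquiv)) (hf : ForcedIncreasing α f) (hγ : Continuous γ)
    (hγf : MapsTo f (curveGraph γ) (curveGraph γ)) :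
    IsAAMinimal (lift h) (closure (B.regularCurve γ)) :=
  isAAMinimal_closure hα hαequi (continuous_lift h hf.1) continuous_fst
    (forcedIncreasing_lift h hf).2.1 (mapsTo_lift_regularCurve h hγf) dense_image_fst_regularCurve
    fun _ hp _ hq => eq_of_mem_regularCurve hp (closure_regularCurve_subset hγ hq)

theorem coord_eq_one {i : ι} {p : Θ × Icc a b}
    (hp : p ∈ closure (B.collapse ⁻¹' curveGraph γ ∩
      Prod.fst ⁻¹' {θ | B.gauge i θ < B.height i (θ, γ θ)})) : (B.coord i p : ℝ) = 1 := by
  refine closure_minimal (t := {p | (B.coord i p : ℝ) = 1}) ?_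
    (isClosed_eq (continuous_subtype_val.comp (B.continuous_coord i)) continuous_const) hp
  exact fun p ⟨hcurve, hlt⟩ => (B.isClampedQuotient_coord i p).eq_one (B.gauge_nonneg i p.1)
    (collapse_eq_of_mem_curveGraph hcurve ▸ hlt)

theorem coord_eq_neg_one {i : ι} {p : Θ × Icc a b}
    (hp : p ∈ closure (B.collapse ⁻¹' curveGraph γ ∩
      Prod.fst ⁻¹' {θ | B.height i (θ, γ θ) < -B.gauge i θ})) : (B.coord i p : ℝ) = -1 := by
  refine closure_minimal (t := {p | (B.coord i p : ℝ) = -1}) ?_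
    (isClosed_eq (continuous_subtype_val.comp (B.continuous_coord i)) continuous_const) hp
  exact fun p ⟨hcurve, hlt⟩ => (B.isClampedQuotient_coord i p).eq_neg_one (B.gauge_nonneg i p.1)
    (collapse_eq_of_mem_curveGraph hcurve ▸ hlt)

end BlowUpDatum

end BlownUpCurve

section OrbitBlowUp

variable {Θ : Type*} [MetricSpace Θ] {a b : ℝ} {α : Θ ≃ₜ Θ} {f : Θ × Icc a b → Θ × Icc a b}
  {γ : Θ → Icc a b} {θ₀ : Θ}

/-- The datum `B` blows up the points of the curve `γ` over the `α`-orbit of `θ₀`, compatibly with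
`f`, and along the curve the quotient `height 0 / gauge 0` oscillates at `θ₀`. -/
structure BlowUpDatum.IsAlongOrbit (B : BlowUpDatum Θ ℤ a b) (α : Θ ≃ₜ Θ)
    (f : Θ × Icc a b → Θ × Icc a b) (γ : Θ → Icc a b) (θ₀ : Θ) : Prop where
  center_apply : ∀ n, B.center n = ((α ^ n) θ₀, γ ((α ^ n) θ₀))
  isEquivariant : B.IsEquivariant f (Equiv.addRight 1)
  isOscillation : IsOscillation (B.gauge 0) (fun θ => B.height 0 (θ, γ θ)) θ₀

theorem BlowUpDatum.IsAlongOrbit.range_center_subset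
    {B : BlowUpDatum Θ ℤ a b} (h : B.IsAlongOrbit α f γ θ₀) : range B.center ⊆ curveGraph γ := by
  rintro _ ⟨n, rfl⟩
  rw [h.center_apply]
  rfl

theorem BlowUpDatum.IsAlongOrbit.eq_center_of_iterate {B : BlowUpDatum Θ ℤ a b}
    (h : B.IsAlongOrbit α f γ θ₀) {p : Θ × Icc a b} {m : ℕ} {n : ℤ}
    (hp : f^[m] p = B.center n) : p = B.center (n - m) := by
  induction m generalizing p with
  | zero => simpa using hp
  | succ m ih =>
    refine (BlowUpDatum.apply_eq_center_iff h.isEquivariant).1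
      ((ih hp).trans (congrArg B.center ?_))
    simp only [Equiv.coe_addRight]
    push_cast
    ring

variable [CompactSpace Θ]

/-- The quotient at the `n`-th orbit point is the one at `θ₀` moved by `αⁿ`, with the coordinate
vanishing on `γ` added to make it strictly increasing in the fibres. -/
theorem ForcedIncreasing.exists_isAlongOrbit [Infinite Θ] (hα : MinimalHomeo α)
    (hab : a < b) (hf : ForcedIncreasing α f) (hγ : Continuous γ)
    (hγint : ∀ θ, (γ θ : ℝ) ∈ Ioo a b) (hγinv : ∀ θ, f (θ, γ θ) = (α θ, γ (α θ))) (θ₀ : Θ) :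
    ∃ B : BlowUpDatum Θ ℤ a b, B.IsAlongOrbit α f γ θ₀ := by
  have := hα.neBot_nhdsNE θ₀
  obtain ⟨δ, τ, hδτ⟩ := exists_isOscillation θ₀
  obtain ⟨V, hVcont, hVmono, hVγ, hVf⟩ := hf.exists_fiber_coordinates hab.le hγ hγinv
  have hδ := hδτ.continuous_gauge
  have hτ := hδτ.continuous_osc
  have hneg (n : ℤ) (θ θ' : Θ) : (α ^ (-n)) θ = θ' ↔ θ = (α ^ n) θ' := by
    rw [zpow_neg]
    exact (α ^ n).symm_apply_eq
  have hstep (n : ℤ) (p : Θ × Icc a b) : (α ^ (-(n + 1))) (f p).1 = (α ^ (-n)) p.1 := by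
    rw [hf.2.1, ← Homeomorph.mul_apply, ← zpow_add_one, neg_add, neg_add_cancel_right]
  let B : BlowUpDatum Θ ℤ a b := {
    lt := hab
    center n := ((α ^ n) θ₀, γ ((α ^ n) θ₀))
    center_injective m n hmn := hα.injective_orbit θ₀ (congrArg Prod.fst hmn)
    center_mem_Ioo n := hγint _
    gauge n θ := δ ((α ^ (-n)) θ)
    continuous_gauge n := by fun_prop
    gauge_nonneg n θ := hδτ.gauge_nonneg _
    gauge_eq_zero_iff n θ := (hδτ.gauge_eq_zero_iff _).trans (hneg n θ θ₀)
    height n p := τ ((α ^ (-n)) p.1) + V n p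
    continuous_height n := by fun_prop
    strictMono_height n θ x y hxy := by dsimp only; gcongr; exact hVmono n θ hxy
    height_center n := by simp only [(hneg n _ θ₀).2, hδτ.osc_center, hVγ, add_zero] }
  refine ⟨B, fun n => rfl, ⟨fun n p => congrArg δ (hstep n p), fun n p =>
    congrArg₂ (· + ·) (congrArg τ (hstep n p)) (hVf n p)⟩, ?_⟩
  simpa only [B, hVγ, neg_zero, zpow_zero, Homeomorph.one_apply, add_zero] using hδτ

namespace BlowUpDatum.IsAlongOrbit

variable {B : BlowUpDatum Θ ℤ a b}

theorem not_curveGraph_subset (h : B.IsAlongOrbit α f γ θ₀) {η : Θ → Icc a b}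
    (hη : Continuous η) : ¬ curveGraph η ⊆ B.collapse ⁻¹' curveGraph γ := by
  intro hsub
  have hclosure {A : Set Θ} (hA : θ₀ ∈ closure A) :
      (θ₀, η θ₀) ∈ closure (B.collapse ⁻¹' curveGraph γ ∩ Prod.fst ⁻¹' A) :=
    map_mem_closure (f := fun θ => (θ, η θ)) (by fun_prop) hA fun θ hθ => ⟨hsub rfl, hθ⟩
  have hone := coord_eq_one (hclosure h.isOscillation.mem_closure_gauge_lt)
  have hneg := coord_eq_neg_one (hclosure h.isOscillation.mem_closure_lt_neg_gauge)
  linarith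

theorem blowUpConclusion (h : B.IsAlongOrbit α f γ θ₀) (hf : ForcedIncreasing α f) :
    BlowUpConclusion α f γ (lift h.isEquivariant) B.collapse := by
  refine ⟨isFactorMap_collapse h.isEquivariant, B.collapse_fst,
    forcedIncreasing_lift h.isEquivariant hf, B.monotone_collapse, fun p hp q _ hpq => ?_,
    ⟨range B.center, h.range_center_subset, countable_range _, ?_, fun p hp => ?_⟩,
    fun η hη => h.not_curveGraph_subset hη⟩
  · exact eq_of_collapse_eq hpq fun hmem => hp (h.range_center_subset hmem)
  · rintro _ ⟨n, rfl⟩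
    exact collapse_preimage_center n
  · exact collapse_preimage_of_notMem hp.2

theorem exists_mem_closure_regularCurve [∀ θ : Θ, (𝓝[≠] θ).NeBot]
    (h : B.IsAlongOrbit α f γ θ₀) (hγ : Continuous γ) :
    ∃ p ∈ closure (B.regularCurve γ), ∃ q ∈ closure (B.regularCurve γ),
      B.collapse p = B.center 0 ∧ B.collapse q = B.center 0 ∧ p ≠ q := by
  have hcont : Continuous fun θ => B.height 0 (θ, γ θ) := h.isOscillation.continuous_osc
  have hgauge := B.continuous_gauge 0
  obtain ⟨p, hp, hpθ⟩ := exists_mem_closure_inter_preimage continuous_fst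
    (B.dense_image_fst_regularCurve (γ := γ)) (isOpen_lt hgauge hcont)
    h.isOscillation.mem_closure_gauge_lt
  obtain ⟨q, hq, hqθ⟩ := exists_mem_closure_inter_preimage continuous_fst
    (B.dense_image_fst_regularCurve (γ := γ)) (isOpen_lt hcont hgauge.neg)
    h.isOscillation.mem_closure_lt_neg_gauge
  have hsub (A : Set Θ) : B.regularCurve γ ∩ Prod.fst ⁻¹' A ⊆
      B.collapse ⁻¹' curveGraph γ ∩ Prod.fst ⁻¹' A :=
    inter_subset_inter_left _ (preimage_mono sdiff_subset)
  have hcenter {p : Θ × Icc a b} (hp : p ∈ closure (B.regularCurve γ)) (hpθ : p.1 = θ₀) :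
      B.collapse p = B.center 0 := by
    rw [collapse_eq_of_mem_curveGraph (closure_regularCurve_subset hγ hp), hpθ, h.center_apply,
      zpow_zero, Homeomorph.one_apply]
  have hp_mem := closure_mono inter_subset_left hp
  have hq_mem := closure_mono inter_subset_left hq
  refine ⟨p, hp_mem, q, hq_mem, hcenter hp_mem hpθ, hcenter hq_mem hqθ, ?_⟩
  rintro rfl
  have hone := coord_eq_one (closure_mono (hsub _) hp)
  have hneg := coord_eq_neg_one (closure_mono (hsub _) hq)
  linarith

theorem not_isAPMinimal [∀ θ : Θ, (𝓝[≠] θ).NeBot] (h : B.IsAlongOrbit α f γ θ₀)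
    (hγ : Continuous γ) : ¬ IsAPMinimal (lift h.isEquivariant) (closure (B.regularCurve γ)) := by
  intro hM
  obtain ⟨p, hp, q, hq, hp_center, hq_center, hpq⟩ := h.exists_mem_closure_regularCurve hγ
  have hsurj (m : ℕ) := SurjOn.iterate hM.1.2.2.1.superset m
  choose u hu hup using fun m => hsurj m hp
  choose v hv hvq using fun m => hsurj m hq
  have hcollapse {x y : Θ × Icc a b} {m : ℕ} (hxy : (lift h.isEquivariant)^[m] x = y)
      (hy : B.collapse y = B.center 0) : B.collapse x = B.center (0 - m) := by
    refine h.eq_center_of_iterate ?_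
    rw [← Semiconj.iterate_right (collapse_lift h.isEquivariant) m x, hxy, hy]
  refine hpq (hM.eq_of_tendsto_dist hu hv hup hvq (tendsto_dist_of_collapse_eq_center
    (i := fun m : ℕ => (0 : ℤ) - m) (fun m n hmn => by simpa using hmn)
    (fun m => hcollapse (hup m) hp_center) fun m => hcollapse (hvq m) hq_center))

end BlowUpDatum.IsAlongOrbit

end OrbitBlowUp

theorem stmt1_general {Θ : Type} [MetricSpace Θ] [CompactSpace Θ] [Infinite Θ] {α : Θ ≃ₜ Θ}
    (hα : MinimalHomeo α) (hαequi : Equicontinuous (zIter α.toEquiv)) {I : Set ℝ}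
    (hIcomp : IsCompact I) (hIconn : I.OrdConnected) {f : Θ × ↥I → Θ × ↥I}
    (hf : ForcedIncreasing α f) {γ : Θ → ↥I} (hγc : Continuous γ)
    (hγint : ∀ θ, (γ θ : ℝ) ∈ interior I) (hγinv : ∀ θ, f (θ, γ θ) = (α θ, γ (α θ))) :
    ∃ fhat h : Θ × ↥I → Θ × ↥I, BlowUpConclusion α f γ fhat h ∧
      Pinched (h ⁻¹' curveGraph γ) ∧
      ∃ M : Set (Θ × ↥I), M ⊆ h ⁻¹' curveGraph γ ∧ IsAAMinimal fhat M ∧ ¬ IsAPMinimal fhat M := by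
  have hneBot := hα.neBot_nhdsNE
  obtain ⟨θ₀⟩ : Nonempty Θ := inferInstance
  obtain ⟨a, b, rfl⟩ : ∃ a b, I = Icc a b :=
    ⟨_, _, eq_Icc_of_connected_compact ⟨⟨_, (γ θ₀).2⟩, hIconn.isPreconnected⟩ hIcomp⟩
  simp only [interior_Icc] at hγint
  have hab : a < b := (hγint θ₀).1.trans (hγint θ₀).2
  obtain ⟨B, hB⟩ := hf.exists_isAlongOrbit hα hab hγc hγint hγinv θ₀
  have hγf : MapsTo f (curveGraph γ) (curveGraph γ) := by
    rintro ⟨θ, x⟩ (rfl : x = γ θ)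
    exact hγinv θ ▸ rfl
  exact ⟨BlowUpDatum.lift hB.isEquivariant, B.collapse, hB.blowUpConclusion hf,
    BlowUpDatum.pinched_collapse_preimage, closure (B.regularCurve γ),
    BlowUpDatum.closure_regularCurve_subset hγc,
    BlowUpDatum.isAAMinimal_closure_regularCurve hB.isEquivariant hα hαequi hf hγc hγf,
    hB.not_isAPMinimal hγc⟩

section Rotation

theorem zIter_addRight {G : Type*} [AddGroup G] [TopologicalSpace G] [ContinuousAdd G] (g : G)
    (n : ℤ) : zIter (Homeomorph.addRight g).toEquiv n = fun x => x + n • g :=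
  congrArg DFunLike.coe (Equiv.zsmul_addRight g n)

theorem minimalHomeo_addRight {p ρ : ℝ} (hρ : Irrational (ρ / p)) :
    MinimalHomeo (Homeomorph.addRight (ρ : AddCircle p)) := by
  intro θ
  simp only [zIter_addRight]
  exact (Homeomorph.addLeft θ).surjective.denseRange.comp
    (AddCircle.denseRange_zsmul_coe_iff.2 hρ) (by fun_prop)

theorem equicontinuous_zIter_addRight {G : Type*} [SeminormedAddCommGroup G] (g : G) :
    Equicontinuous (zIter (Homeomorph.addRight g).toEquiv) := by
  refine Metric.equicontinuous_of_continuity_modulus id tendsto_id _ fun x y n => ?_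
  rw [zIter_addRight, dist_add_right, id]

instance infinite_addCircle {p : ℝ} [hp : Fact (0 < p)] : Infinite (AddCircle p) :=
  have := (Ico_infinite (lt_add_of_pos_right 0 hp.out)).to_subtype
  (AddCircle.equivIco p 0).infinite_iff.2 this

end Rotation

/-- the blow-up construction for quasiperiodically forced increasing
interval maps. -/
theorem stmt1 {I : Set ℝ} (hIcomp : IsCompact I) (hIconn : I.OrdConnected)
    (ρ : ℝ) (hρ : Irrational ρ)
    (f : T1 × ↥I → T1 × ↥I) (hf : ForcedIncreasing (fun θ : T1 => θ + (ρ : T1)) f)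
    (γ : T1 → ↥I) (hγc : Continuous γ) (hγint : ∀ θ : T1, (γ θ : ℝ) ∈ interior I)
    (hγinv : ∀ θ : T1, f (θ, γ θ) = (θ + (ρ : T1), γ (θ + (ρ : T1)))) :
    ∃ fhat h : T1 × ↥I → T1 × ↥I,
      BlowUpConclusion (fun θ : T1 => θ + (ρ : T1)) f γ fhat h ∧
      Pinched (h ⁻¹' curveGraph γ) ∧
      ∃ M : Set (T1 × ↥I), M ⊆ h ⁻¹' curveGraph γ ∧
        IsAAMinimal fhat M ∧ ¬ IsAPMinimal fhat M :=
  stmt1_general (minimalHomeo_addRight (by rwa [div_one])) (equicontinuous_zIter_addRight _)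
    hIcomp hIconn hf hγc hγint hγinv

end
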